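/- arXiv:2204.02129 — 3 statements merged into one kernel-verified Lean document; each statement's English description precedes it below -/
import Mathlib

section
/- Fix k₁ ∈ (0,1) and k₂ > 0, and for x₁, x₂, u ∈ ℝⁿ define V₁(x₂, u) = ‖σ(u)‖² + 2k₁·σ(u)ᵀx₂ + k₁‖x₂‖² + 2·σ(u)ᵀ(u − σ(u)). Then V₁(x₂, u) ≥ 0 for all x₂, u ∈ ℝⁿ, and V₁(x₂, u) = 0 if and only if u = 0 and x₂ = 0. -/
/-- The standard scalar saturation function `sat(w) = sgn(w) · min(1, |w|)`. -/
noncomputable def sat (w : ℝ) : ℝ := Real.sign w * min 1 |w|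

/-- The componentwise saturation `σ : ℝⁿ → ℝⁿ`, `(σ(v))ᵢ = sat(vᵢ)`. -/
noncomputable def satv {n : ℕ} (v : Fin n → ℝ) : Fin n → ℝ := fun i => sat (v i)

/-- The Lyapunov candidate
`V₁(x₂,u) = ‖σ(u)‖² + 2k₁·σ(u)ᵀx₂ + k₁‖x₂‖² + 2σ(u)ᵀ(u − σ(u))`. -/
noncomputable def V₁ {n : ℕ} (k₁ : ℝ) (x₂ u : Fin n → ℝ) : ℝ :=
  (∑ i, (satv u i)^2) + 2 * k₁ * (∑ i, satv u i * x₂ i) + k₁ * (∑ i, (x₂ i)^2)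
    + 2 * (∑ i, satv u i * (u i - satv u i))

/-! Completing the square coordinatewise, with `s = sat (u i)` and `x = x₂ i`, each coordinate
contributes `(1 - k₁) s² + k₁ (s + x)² + 2 s (u i - s)` to `V₁`. All three terms are nonnegative,
the last one because `s` has the sign of `u i` and `|s| ≤ |u i|`. If the sum vanishes, then so
does every coordinate; hence `s = 0`, so `u i = 0`, and then `s + x = 0` gives `x = 0`. -/

lemma sat_mul_sub_nonneg (w : ℝ) : 0 ≤ sat w * (w - sat w) := by
  unfold sat
  rcases lt_trichotomy w 0 with h | rfl | h
  · rw [Real.sign_of_neg h, abs_of_neg h]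
    have h1 : min 1 (-w) ≤ -w := min_le_right _ _
    have h2 : 0 ≤ min 1 (-w) := le_min zero_le_one (by linarith)
    nlinarith
  · simp
  · rw [Real.sign_of_pos h, abs_of_pos h]
    have h1 : min 1 w ≤ w := min_le_right _ _
    have h2 : 0 ≤ min 1 w := le_min zero_le_one h.le
    nlinarith

lemma sat_eq_zero_iff (w : ℝ) : sat w = 0 ↔ w = 0 := by
  refine ⟨fun h => ?_, fun h => by simp [sat, h]⟩
  by_contra hw
  have h1 : min 1 |w| ≠ 0 := (lt_min one_pos (abs_pos.mpr hw)).ne'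
  exact mul_ne_zero (mt Real.sign_eq_zero_iff.mp hw) h1 h

lemma V₁_eq_sum {n : ℕ} (k₁ : ℝ) (x₂ u : Fin n → ℝ) :
    V₁ k₁ x₂ u = ∑ i, ((1 - k₁) * sat (u i) ^ 2 + k₁ * (sat (u i) + x₂ i) ^ 2
      + 2 * (sat (u i) * (u i - sat (u i)))) := by
  simp only [V₁, satv, Finset.mul_sum, ← Finset.sum_add_distrib]
  exact Finset.sum_congr rfl fun i _ => by ring

/-- Positivity of the Lyapunov function `V₁` from the proof of Theorem 1 of the
paper: for `k₁ ∈ (0,1)` and `k₂ > 0`, `V₁(x₂,u) ≥ 0` for all `x₂, u ∈ ℝⁿ`,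
with equality iff `u = 0` and `x₂ = 0`. -/
theorem V₁_positivity {n : ℕ} (k₁ k₂ : ℝ) (hk₁ : k₁ ∈ Set.Ioo (0:ℝ) 1)
    (hk₂ : 0 < k₂) (x₂ u : Fin n → ℝ) :
    0 ≤ V₁ k₁ x₂ u ∧ (V₁ k₁ x₂ u = 0 ↔ u = 0 ∧ x₂ = 0) := by
  obtain ⟨h0, h1⟩ := hk₁
  have hs (i : Fin n) : 0 ≤ (1 - k₁) * sat (u i) ^ 2 :=
    mul_nonneg (by linarith) (sq_nonneg _)
  have hx (i : Fin n) : 0 ≤ k₁ * (sat (u i) + x₂ i) ^ 2 :=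
    mul_nonneg h0.le (sq_nonneg _)
  have hr (i : Fin n) := sat_mul_sub_nonneg (u i)
  have hterm (i : Fin n) : 0 ≤ (1 - k₁) * sat (u i) ^ 2 + k₁ * (sat (u i) + x₂ i) ^ 2
      + 2 * (sat (u i) * (u i - sat (u i))) := by linarith [hs i, hx i, hr i]
  rw [V₁_eq_sum]
  refine ⟨Finset.sum_nonneg fun i _ => hterm i, fun h => ?_, ?_⟩
  · rw [Finset.sum_eq_zero_iff_of_nonneg fun i _ => hterm i] at h
    have hsat (i : Fin n) : sat (u i) = 0 := by
      have h2 : (1 - k₁) * sat (u i) ^ 2 = 0 := by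
        linarith [hs i, hx i, hr i, h i (Finset.mem_univ i)]
      exact pow_eq_zero_iff two_ne_zero |>.mp
        ((mul_eq_zero.mp h2).resolve_left (by linarith))
    refine ⟨funext fun i => (sat_eq_zero_iff _).mp (hsat i), funext fun i => ?_⟩
    have h2 := h i (Finset.mem_univ i)
    simpa [hsat i, h0.ne'] using h2
  · rintro ⟨rfl, rfl⟩
    simp [sat]
end

section
/- Let k₁ ∈ (0,1) and k₂ > 0 satisfy (1+k₁−k₂)² < 1−k₁, and let c ≥ 0 be any real number. Then there exists h₀ ∈ (0,1) such that for every h ∈ (h₀, 1), the symmetric 2×2 real matrix Φ(h) = [[−1 + c·(1−h)·(k₁²+k₂²)/h, 1+k₁−k₂], [1+k₁−k₂, −(1−k₁)]] is negative definite. -/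
open Matrix

/-!
Write `b = 1 + k₁ - k₂`, `d = 1 - k₁ > 0` and `t = c (1 - h) (k₁² + k₂²) / h`. The Schur complement
reduces negativity of `[[-1 + t, b], [b, -d]]` to `b² < (1 - t) d` (`quadForm_neg`). The gain
condition says that this holds with a margin `ε = d - b² > 0` at `t = 0`, and `t → 0` as `h → 1`;
an explicit threshold is obtained by clearing denominators in `t d < ε`.
-/

/-- Completing the square: `d` times the form is `-((a d - b²) x² + (b x - d y)²)`. -/
lemma quadForm_neg {a b d x y : ℝ} (hd : 0 < d) (hab : b ^ 2 < a * d) (hxy : x ≠ 0 ∨ y ≠ 0) :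
    -a * x ^ 2 + 2 * b * x * y - d * y ^ 2 < 0 := by
  have key : d * (-a * x ^ 2 + 2 * b * x * y - d * y ^ 2)
      = -((a * d - b ^ 2) * x ^ 2 + (b * x - d * y) ^ 2) := by ring
  have hpos : 0 < (a * d - b ^ 2) * x ^ 2 + (b * x - d * y) ^ 2 := by
    have hs : 0 < a * d - b ^ 2 := sub_pos.mpr hab
    by_cases hx : x = 0
    · have hy : y ≠ 0 := hxy.resolve_left (not_not.mpr hx)
      subst hx
      have : 0 < (d * y) ^ 2 := by positivity
      nlinarith
    · positivity
  by_contra! hn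
  nlinarith [mul_nonneg hd.le hn]

/-- The key matrix-negativity step (via the Schur complement) in the proof of
Theorem 1 of the paper: if `k₁ ∈ (0,1)`, `k₂ > 0` satisfy `(1+k₁−k₂)² < 1−k₁`
and `c ≥ 0`, then there exists `h₀ ∈ (0,1)` such that for every `h ∈ (h₀,1)`
the matrix `Φ(h) = [[−1 + c(1−h)(k₁²+k₂²)/h, 1+k₁−k₂], [1+k₁−k₂, −(1−k₁)]]`
is negative definite. -/
theorem Phi_negdef (k₁ k₂ c : ℝ) (hk₁ : k₁ ∈ Set.Ioo (0:ℝ) 1) (hk₂ : 0 < k₂)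
    (hgain : (1 + k₁ - k₂)^2 < 1 - k₁) (hc : 0 ≤ c) :
    ∃ h₀ ∈ Set.Ioo (0:ℝ) 1, ∀ h ∈ Set.Ioo h₀ 1,
      ∀ z : Fin 2 → ℝ, z ≠ 0 →
        z ⬝ᵥ ((!![-1 + c * (1 - h) * (k₁^2 + k₂^2) / h, 1 + k₁ - k₂;
                  1 + k₁ - k₂, -(1 - k₁)]) *ᵥ z) < 0 := by
  obtain ⟨_, hk1⟩ := hk₁
  set b := 1 + k₁ - k₂
  have hd : 0 < 1 - k₁ := by linarith
  set d := 1 - k₁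
  have hK : 0 ≤ c * (k₁^2 + k₂^2) * d := by positivity
  set K := c * (k₁^2 + k₂^2) * d with hKdef
  obtain ⟨ε, hε, hεd⟩ : ∃ ε, 0 < ε ∧ ε = d - b ^ 2 := ⟨_, sub_pos.mpr hgain, rfl⟩
  -- `t d < ε` amounts to `h > K / (K + ε)`; this slightly larger bound stays positive when `K = 0`.
  refine ⟨(K + ε) / (K + 2 * ε), ⟨by positivity, ?_⟩, ?_⟩
  · rw [div_lt_one (by positivity)]
    linarith
  rintro h ⟨hh0, hh1⟩ z hz
  have hh : 0 < h := lt_trans (by positivity) hh0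
  rw [div_lt_iff₀ (by positivity)] at hh0
  have ht : c * (1 - h) * (k₁^2 + k₂^2) / h * d < ε := by
    rw [div_mul_eq_mul_div, div_lt_iff₀ hh]
    have : c * (1 - h) * (k₁^2 + k₂^2) * d = K * (1 - h) := by rw [hKdef]; ring
    rw [this]
    nlinarith
  have hz' : z 0 ≠ 0 ∨ z 1 ≠ 0 := by
    by_contra! h0
    exact hz (by ext i; fin_cases i; exacts [h0.1, h0.2])
  have hq := quadForm_neg (a := 1 - c * (1 - h) * (k₁^2 + k₂^2) / h) (b := b) hd
    (by linarith) hz'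
  simp only [Matrix.mulVec, dotProduct, Fin.sum_univ_two, Matrix.of_apply, Matrix.cons_val_zero,
    Matrix.cons_val_one]
  linarith
end

section
/- Let k₁ ∈ (0,1) and k₂ > 0, and consider sequences x₁, x₂ : ℕ → ℝⁿ satisfying x₁(k+1) = x₁(k) + x₂(k) and x₂(k+1) = x₂(k) + σ(u(k)), where u(k) = −k₁ x₁(k) − k₂ x₂(k). Define V₁(k) = ‖σ(u(k))‖² + 2k₁·σ(u(k))ᵀx₂(k) + k₁‖x₂(k)‖² + 2·σ(u(k))ᵀ(u(k) − σ(u(k))). Then for every k, V₁(k+1) − V₁(k) ≤ 2(1+k₁−k₂)·σ(u(k+1))ᵀσ(u(k)) − ‖σ(u(k+1))‖² − (1−k₁)·‖σ(u(k))‖². -/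
/-!
Fix a coordinate and write `s = sat(u(k))`, `t = sat(u(k+1))`. The dynamics give
`u(k+1) = u(k) - k₁ x₂(k) - k₂ s`, and substituting this and `x₂(k+1) = x₂(k) + s` shows that the
right-hand side minus the left-hand side is exactly `2 (t - s) (s - u(k))`. Since `s` is the
projection of `u(k)` onto `[-1, 1]` and `t` lies in that interval, this is nonnegative: that is
`sat_sub_mul_sub_sat_nonpos`. Summing over the coordinates gives the bound.
-/

open Filter

/-- Saturation is the projection of `ℝ` onto `[-1, 1]`. -/
lemma sat_eq_max_min (w : ℝ) : sat w = max (-1) (min 1 w) := by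
  unfold sat
  rcases lt_trichotomy w 0 with h | rfl | h
  · rw [Real.sign_of_neg h, abs_of_neg h, min_eq_right (by linarith : w ≤ 1)]
    rcases le_total 1 (-w) with h1 | h1
    · rw [min_eq_left h1, max_eq_left (by linarith)]; ring
    · rw [min_eq_right h1, max_eq_right (by linarith)]; ring
  · simp
  · rw [Real.sign_of_pos h, abs_of_pos h, one_mul, max_eq_right]
    exact le_min (by norm_num) (by linarith)

/-- The variational inequality for the projection onto `[-1, 1]`, tested at the point `sat v`. -/
lemma sat_sub_mul_sub_sat_nonpos (v w : ℝ) : (sat v - sat w) * (w - sat w) ≤ 0 := by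
  have hlo : -1 ≤ sat v := by rw [sat_eq_max_min]; exact le_max_left _ _
  have hhi : sat v ≤ 1 := by
    rw [sat_eq_max_min]; exact max_le (by norm_num) (min_le_left _ _)
  rw [sat_eq_max_min w]
  rcases le_total 1 w with h | h
  · rw [min_eq_left h, max_eq_right (by norm_num)]
    exact mul_nonpos_of_nonpos_of_nonneg (by linarith) (by linarith)
  · rw [min_eq_right h]
    rcases le_total w (-1) with h1 | h1
    · rw [max_eq_left h1]
      exact mul_nonpos_of_nonneg_of_nonpos (by linarith) (by linarith)
    · rw [max_eq_right h1]; simp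

/-- The Lyapunov difference bound `ΔV₁` (disturbance-free case) from the proof
of Theorem 1 of the paper: along the saturated double-integrator dynamics
`x₁(k+1) = x₁(k) + x₂(k)`, `x₂(k+1) = x₂(k) + σ(u(k))` with
`u(k) = −k₁x₁(k) − k₂x₂(k)`, one has
`V₁(k+1) − V₁(k) ≤ 2(1+k₁−k₂)·σ(u(k+1))ᵀσ(u(k)) − ‖σ(u(k+1))‖² − (1−k₁)‖σ(u(k))‖²`. -/
theorem V₁_difference_bound {n : ℕ} (k₁ k₂ : ℝ)
    (hk₁ : k₁ ∈ Set.Ioo (0:ℝ) 1) (hk₂ : 0 < k₂)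
    (x₁ x₂ u : ℕ → Fin n → ℝ)
    (hu : ∀ k, u k = (-k₁) • x₁ k - k₂ • x₂ k)
    (hx₁ : ∀ k, x₁ (k+1) = x₁ k + x₂ k)
    (hx₂ : ∀ k, x₂ (k+1) = x₂ k + satv (u k)) :
    ∀ k : ℕ, V₁ k₁ (x₂ (k+1)) (u (k+1)) - V₁ k₁ (x₂ k) (u k) ≤
      2 * (1 + k₁ - k₂) * (∑ i, satv (u (k+1)) i * satv (u k) i)
        - (∑ i, (satv (u (k+1)) i)^2) - (1 - k₁) * (∑ i, (satv (u k) i)^2) := by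
  intro k
  unfold V₁
  simp only [Finset.mul_sum, ← Finset.sum_add_distrib, ← Finset.sum_sub_distrib]
  refine Finset.sum_le_sum fun i _ => ?_
  have hui : u (k+1) i = u k i - k₁ * x₂ k i - k₂ * satv (u k) i := by
    simp only [hu (k+1), hu k, hx₁, hx₂, Pi.sub_apply, Pi.smul_apply, Pi.add_apply, smul_eq_mul]
    ring
  have hxi : x₂ (k+1) i = x₂ k i + satv (u k) i := by rw [hx₂, Pi.add_apply]
  have hproj : (satv (u (k+1)) i - satv (u k) i) * (u k i - satv (u k) i) ≤ 0 :=
    sat_sub_mul_sub_sat_nonpos _ _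
  -- Generalizing the saturated values keeps the substitution for `u (k+1) i` out of `satv`.
  generalize satv (u (k+1)) i = t at *
  generalize satv (u k) i = s at *
  rw [hui, hxi]
  linarith
end
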